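/- arXiv:2208.10054 — 3 statements merged into one kernel-verified Lean document; each statement's English description precedes it below -/
import Mathlib

section
/- Let a, x, c ∈ ℝ with a ≤ x and a ≤ c, and let α, β > 0. Then ∫_a^x 1/(α·(max(u−c,0))² + 1/β) du = β·(min(x,c) − a) + √(β/α)·arctan(√(αβ)·max(x−c,0)). -/
open Real

lemma continuous_one_div_landscape_f2 (c : ℝ) {α β : ℝ} (hα : 0 < α) (hβ : 0 < β) :
    Continuous fun u : ℝ => 1 / (α * max (u - c) 0 ^ 2 + 1 / β) := by
  refine continuous_const.div (by fun_prop) fun u => ?_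
  positivity

lemma integral_landscape_f2_of_le {a x c : ℝ} (α β : ℝ) (hax : a ≤ x) (hxc : x ≤ c) :
    (∫ u in a..x, 1 / (α * max (u - c) 0 ^ 2 + 1 / β)) = β * (x - a) := by
  have hconst : Set.EqOn (fun u : ℝ => 1 / (α * max (u - c) 0 ^ 2 + 1 / β)) (fun _ => β)
      (Set.uIcc a x) := by
    intro u hu
    rw [Set.uIcc_of_le hax] at hu
    simp [max_eq_right (sub_nonpos.2 (hu.2.trans hxc))]
  rw [intervalIntegral.integral_congr hconst, intervalIntegral.integral_const, smul_eq_mul,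
    mul_comm]

lemma hasDerivAt_sqrt_mul_arctan (c u : ℝ) {α β : ℝ} (hα : 0 < α) (hβ : 0 < β) :
    HasDerivAt (fun u => √(β / α) * arctan (√(α * β) * (u - c)))
      (1 / (α * (u - c) ^ 2 + 1 / β)) u := by
  have hprod : √(β / α) * √(α * β) = β := by
    rw [← Real.sqrt_mul (by positivity), show β / α * (α * β) = β ^ 2 by field_simp,
      Real.sqrt_sq hβ.le]
  have hsq : √(α * β) ^ 2 = α * β := Real.sq_sqrt (by positivity)
  refine HasDerivAt.congr_deriv
    ((((hasDerivAt_id' u).sub_const c).const_mul √(α * β)).arctan.const_mul √(β / α)) ?_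
  rw [mul_one, mul_left_comm, hprod, mul_pow, hsq]
  have h₁ : α * (u - c) ^ 2 + 1 / β ≠ 0 := by positivity
  have h₂ : 1 + α * β * (u - c) ^ 2 ≠ 0 := by positivity
  rw [one_div_mul_eq_div, div_eq_div_iff h₂ h₁]
  field_simp
  ring

lemma integral_landscape_f2_from_threshold {x c α β : ℝ} (hcx : c ≤ x) (hα : 0 < α)
    (hβ : 0 < β) :
    (∫ u in c..x, 1 / (α * max (u - c) 0 ^ 2 + 1 / β)) =
      √(β / α) * arctan (√(α * β) * (x - c)) := by
  rw [intervalIntegral.integral_eq_sub_of_hasDerivAt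
    (f := fun u => √(β / α) * arctan (√(α * β) * (u - c))) (fun u hu => ?_)
    ((continuous_one_div_landscape_f2 c hα hβ).intervalIntegrable _ _)]
  · simp
  · rw [Set.uIcc_of_le hcx] at hu
    rw [max_eq_left (sub_nonneg.2 hu.1)]
    exact hasDerivAt_sqrt_mul_arctan c u hα hβ

/-- Closed-form evaluation of the landscape-modified Hamiltonian integral for the
quadratic modification `f₂(x) = x²`:
`∫_a^x du / (α (u-c)₊² + 1/β) = β (min x c - a) + √(β/α) arctan(√(αβ) (x-c)₊)`. -/
theorem landscape_modification_integral_f2 (a x c α β : ℝ) (hax : a ≤ x) (hac : a ≤ c)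
    (hα : 0 < α) (hβ : 0 < β) :
    (∫ u in a..x, 1 / (α * max (u - c) 0 ^ 2 + 1 / β)) =
      β * (min x c - a) +
        Real.sqrt (β / α) * Real.arctan (Real.sqrt (α * β) * max (x - c) 0) := by
  rcases le_total x c with hxc | hcx
  · rw [integral_landscape_f2_of_le α β hax hxc, min_eq_left hxc,
      max_eq_right (sub_nonpos.2 hxc)]
    simp
  · have hcont := continuous_one_div_landscape_f2 c hα hβ
    rw [← intervalIntegral.integral_add_adjacent_intervals (hcont.intervalIntegrable a c)
      (hcont.intervalIntegrable c x), integral_landscape_f2_of_le α β hac le_rfl,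
      integral_landscape_f2_from_threshold hcx hα hβ, min_eq_right hcx,
      max_eq_left (sub_nonneg.2 hcx)]
end

section
/- For every sequence (ε_N)_{N≥1} of real numbers with ε_N → 0 as N → ∞, the minimum of the Random Energy Model Hamiltonian satisfies lim_{N→∞} ℙ( min_{σ∈Σ_N} ℋ_N(σ) > −N·√(2 ln 2) − ε_N ) = 1; equivalently, lim_{N→∞} ℙ( max_{σ∈Σ_N} X_σ < √(2N ln 2) + ε_N/√N ) = 1. -/
open Real Finset Filter MeasureTheory ProbabilityTheory

/-- Spin configuration space `Σ_N = {−1,+1}^N`. -/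
abbrev Conf (N : ℕ) := Fin N → Bool

/-- The law of the i.i.d. standard Gaussian disorder `(X_σ)_{σ ∈ Σ_N}` of the
Random Energy Model. -/
noncomputable def remMeasure (N : ℕ) : Measure (Conf N → ℝ) :=
  Measure.pi fun _ => gaussianReal 0 1

/-- Mills-type tail bound for the standard Gaussian. -/
theorem gaussianReal_Ici_le {t : ℝ} (ht : 0 < t) :
    gaussianReal 0 1 (Set.Ici t) ≤ ENNReal.ofReal (exp (-t ^ 2 / 2) / t) := by
  rw [gaussianReal_apply_eq_integral 0 one_ne_zero, integral_Ici_eq_integral_Ioi]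
  apply ENNReal.ofReal_le_ofReal
  have hint : IntegrableOn (fun x : ℝ => exp (t ^ 2 / 2) * exp (-t * x)) (Set.Ioi t) :=
    (integrableOn_exp_mul_Ioi (neg_lt_zero.mpr ht) t).const_mul _
  calc
    ∫ x in Set.Ioi t, gaussianPDFReal 0 1 x
        ≤ ∫ x in Set.Ioi t, exp (t ^ 2 / 2) * exp (-t * x) := by
      refine integral_mono (integrable_gaussianPDFReal 0 1).restrict hint fun x => ?_
      have hsqrt : (√(2 * π))⁻¹ ≤ 1 :=
        inv_le_one_of_one_le₀ (one_le_sqrt.mpr (by linarith [pi_gt_three]))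
      have hexp : exp (-x ^ 2 / 2) ≤ exp (t ^ 2 / 2) * exp (-t * x) := by
        rw [← exp_add]
        exact exp_le_exp.mpr (by nlinarith [sq_nonneg (x - t)])
      have hmul := mul_le_of_le_one_left (exp_pos (-x ^ 2 / 2)).le hsqrt
      simpa [gaussianPDFReal] using hmul.trans hexp
    _ = exp (-t ^ 2 / 2) / t := by
      rw [integral_const_mul, integral_exp_mul_Ioi (neg_lt_zero.mpr ht), neg_div_neg_eq,
        ← mul_div_assoc, ← exp_add]
      ring_nf

/-- Union bound for the probability that some coordinate of the disorder exceeds `t`. -/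
theorem remMeasure_exists_ge_le (N : ℕ) {t : ℝ} (ht : 0 < t) :
    remMeasure N {ω | ∃ σ, t ≤ ω σ} ≤ ENNReal.ofReal (2 ^ N * (exp (-t ^ 2 / 2) / t)) := by
  have hcoord (σ : Conf N) :
      remMeasure N {ω | t ≤ ω σ} = gaussianReal 0 1 (Set.Ici t) :=
    (measurePreserving_eval (fun _ : Conf N => gaussianReal 0 1) σ).measure_preimage
      measurableSet_Ici.nullMeasurableSet
  calc
    remMeasure N {ω | ∃ σ, t ≤ ω σ} = remMeasure N (⋃ σ, {ω | t ≤ ω σ}) := by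
      rw [Set.ofPred_exists]
    _ ≤ ∑ σ, remMeasure N {ω | t ≤ ω σ} := measure_iUnion_fintype_le _ _
    _ = 2 ^ N * gaussianReal 0 1 (Set.Ici t) := by simp [hcoord]
    _ ≤ 2 ^ N * ENNReal.ofReal (exp (-t ^ 2 / 2) / t) := by
      gcongr
      exact gaussianReal_Ici_le ht
    _ = ENNReal.ofReal (2 ^ N * (exp (-t ^ 2 / 2) / t)) := by
      rw [ENNReal.ofReal_mul (by positivity), ENNReal.ofReal_pow zero_le_two,
        ENNReal.ofReal_ofNat]

/-- At level `t = √N √(2 log 2) + e / √N`, the Gaussian exponential factor compensates the number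
of configurations up to a factor `exp (-√(2 log 2) e)`. -/
theorem two_pow_mul_exp_neg_sq_le {N : ℕ} (hN : 0 < N) (e : ℝ) :
    2 ^ N * exp (-(√N * √(2 * log 2) + e / √N) ^ 2 / 2) ≤ exp (-√(2 * log 2) * e) := by
  have hlog : 0 ≤ 2 * log 2 := by positivity
  have hsqrtN : √(N : ℝ) ≠ 0 := (sqrt_pos.mpr (Nat.cast_pos.mpr hN)).ne'
  have hcancel : √(N : ℝ) * (e / √N) = e := mul_div_cancel₀ e hsqrtN
  have hsq : (√N * √(2 * log 2) + e / √N) ^ 2 =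
      N * (2 * log 2) + 2 * √(2 * log 2) * e + (e / √N) ^ 2 := by
    rw [add_sq, mul_pow, sq_sqrt (Nat.cast_nonneg N), sq_sqrt hlog]
    linear_combination 2 * √(2 * log 2) * hcancel
  rw [← exp_log (pow_pos (zero_lt_two' ℝ) N), log_pow, ← exp_add, exp_le_exp, hsq]
  linarith [sq_nonneg (e / √N)]

/-- For any deterministic sequence `ε_N → 0`, with high probability the minimum of the
REM Hamiltonian `ℋ_N(σ) = −√N X_σ` exceeds `−N√(2 ln 2) − ε_N`. -/
theorem rem_min_lower_bound_whp (ε : ℕ → ℝ) (hε : Tendsto ε atTop (nhds 0)) :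
    Tendsto (fun N : ℕ =>
        remMeasure N {ω : Conf N → ℝ |
          -(N : ℝ) * Real.sqrt (2 * Real.log 2) - ε N <
            Finset.univ.inf' Finset.univ_nonempty fun σ : Conf N =>
              -Real.sqrt N * ω σ})
      atTop (nhds 1) := by
  set c : ℝ := √(2 * log 2)
  have hc : 0 < c := by positivity
  set t : ℕ → ℝ := fun N => √N * c + ε N / √N with ht_def
  have hsqrt : Tendsto (fun N : ℕ => √(N : ℝ)) atTop atTop :=
    tendsto_sqrt_atTop.comp tendsto_natCast_atTop_atTop
  have ht : Tendsto t atTop atTop :=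
    (hsqrt.atTop_mul_const hc).atTop_add (hε.div_atTop hsqrt)
  have hbound : Tendsto (fun N => exp (-c * ε N) / t N) atTop (nhds 0) :=
    ((continuous_exp.tendsto _).comp (hε.const_mul (-c))).div_atTop ht
  have hlower : Tendsto (fun N => 1 - ENNReal.ofReal (exp (-c * ε N) / t N)) atTop (nhds 1) := by
    simpa using ENNReal.Tendsto.sub tendsto_const_nhds (ENNReal.tendsto_ofReal hbound)
      (Or.inl ENNReal.one_ne_top)
  have hprob (N : ℕ) : IsProbabilityMeasure (remMeasure N) := by
    unfold remMeasure
    infer_instance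
  refine tendsto_of_tendsto_of_tendsto_of_le_of_le' hlower tendsto_const_nhds ?_
    (Eventually.of_forall fun N => prob_le_one)
  filter_upwards [ht.eventually_gt_atTop 0, eventually_gt_atTop 0] with N htN hN
  have hNpos : 0 < √(N : ℝ) := sqrt_pos.mpr (Nat.cast_pos.mpr hN)
  have hscale : √(N : ℝ) * t N = N * c + ε N := by
    simp only [ht_def, mul_add, mul_div_cancel₀ _ hNpos.ne', ← mul_assoc,
      mul_self_sqrt (Nat.cast_nonneg N)]
  set good : Set (Conf N → ℝ) := {ω | -(N : ℝ) * c - ε N <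
    Finset.univ.inf' Finset.univ_nonempty fun σ : Conf N => -√N * ω σ} with hgood
  have hcompl : goodᶜ ⊆ {ω | ∃ σ, t N ≤ ω σ} := by
    intro ω hω
    simp only [hgood, Set.mem_compl_iff, Set.mem_ofPred_eq, Finset.lt_inf'_iff, not_forall,
      not_lt] at hω
    obtain ⟨σ, -, hσ⟩ := hω
    exact ⟨σ, le_of_mul_le_mul_left (by linarith) hNpos⟩
  have hbad : remMeasure N goodᶜ ≤ ENNReal.ofReal (exp (-c * ε N) / t N) := by
    refine (measure_mono hcompl).trans ((remMeasure_exists_ge_le N htN).trans ?_)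
    rw [← mul_div_assoc]
    exact ENNReal.ofReal_le_ofReal
      (div_le_div_of_nonneg_right (two_pow_mul_exp_neg_sq_le hN (ε N)) htN.le)
  rw [tsub_le_iff_right]
  calc
    1 = remMeasure N (good ∪ goodᶜ) := by rw [Set.union_compl_self, measure_univ]
    _ ≤ remMeasure N good + remMeasure N goodᶜ := measure_union_le _ _
    _ ≤ remMeasure N good + ENNReal.ofReal (exp (-c * ε N) / t N) := by gcongr
end

section
/- The minimum of the Random Energy Model Hamiltonian satisfies lim_{N→∞} ℙ( min_{σ∈Σ_N} ℋ_N(σ) < −N·√(2 ln 2) + ln N ) = 1. -/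
open Real Finset Filter MeasureTheory ProbabilityTheory

/-- Lower bound for the Gaussian tail by the mass of a single interval. -/
lemma sub_mul_gaussianPDFReal_le_tail {a b : ℝ} (ha : 0 ≤ a) (hab : a ≤ b) :
    (b - a) * gaussianPDFReal 0 1 b ≤ (gaussianReal 0 1).real (Set.Ioi a) := by
  have hint := integrable_gaussianPDFReal 0 1
  calc (b - a) * gaussianPDFReal 0 1 b
      = ∫ _ in Set.Ioc a b, gaussianPDFReal 0 1 b := by
        simp [hab]
    _ ≤ ∫ x in Set.Ioc a b, gaussianPDFReal 0 1 x := by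
        refine setIntegral_mono_on (by simp) hint.integrableOn measurableSet_Ioc ?_
        intro x hx
        have hsq : x ^ 2 ≤ b ^ 2 := by
          have := hx.1
          have := hx.2
          gcongr
          linarith
        simp only [gaussianPDFReal, NNReal.coe_one, sub_zero]
        gcongr
    _ ≤ ∫ x in Set.Ioi a, gaussianPDFReal 0 1 x :=
        setIntegral_mono_set hint.integrableOn
          (ae_of_all _ fun x => gaussianPDFReal_nonneg 0 1 x)
          Set.Ioc_subset_Ioi_self.eventuallyLE
    _ = (gaussianReal 0 1).real (Set.Ioi a) := by
        rw [measureReal_def, gaussianReal_apply_eq_integral 0 one_ne_zero,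
          ENNReal.toReal_ofReal]
        exact integral_nonneg fun x => gaussianPDFReal_nonneg 0 1 x

/-- The level that a single standard Gaussian has to exceed for the corresponding energy to lie
below `−N√(2 ln 2) + ln N`. -/
noncomputable def remLevel (N : ℕ) : ℝ :=
  √N * √(2 * log 2) - log N / √N

lemma one_le_sqrt_two_mul_log_two : 1 ≤ √(2 * log 2) := by
  rw [Real.one_le_sqrt]
  linarith [Real.log_two_gt_d9]

lemma log_natCast_le_two_mul_sqrt {N : ℕ} (hN : 1 ≤ N) : log N ≤ 2 * √N := by
  have hN' : (0 : ℝ) < N := by exact_mod_cast hN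
  have h := Real.log_le_sub_one_of_pos (Real.sqrt_pos.2 hN')
  rw [Real.log_sqrt hN'.le] at h
  linarith

lemma remLevel_nonneg {N : ℕ} (hN : 1 ≤ N) : 0 ≤ remLevel N := by
  have hN' : (0 : ℝ) < N := by exact_mod_cast hN
  have hs : 0 < √(N : ℝ) := Real.sqrt_pos.2 hN'
  rw [remLevel, sub_nonneg, div_le_iff₀ hs]
  have h := Real.log_le_sub_one_of_pos hN'
  have hss := Real.mul_self_sqrt hN'.le
  nlinarith [one_le_sqrt_two_mul_log_two]

/-- The expected number of configurations above the level is at least of order `ln N`. -/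
lemma const_mul_log_le_two_pow_mul_tail {N : ℕ} (hN : 1 ≤ N) :
    (√(2 * π))⁻¹ * exp (-(1 / 2)) / 2 * log N ≤
      2 ^ N * (gaussianReal 0 1).real (Set.Ioi (remLevel N)) := by
  have hN' : (0 : ℝ) < N := by exact_mod_cast hN
  have hs : 0 < √(N : ℝ) := Real.sqrt_pos.2 hN'
  have hlog : 0 ≤ log (N : ℝ) := Real.log_natCast_nonneg N
  have hc := one_le_sqrt_two_mul_log_two
  have hc2 : √(2 * log 2) ^ 2 = 2 * log 2 := Real.sq_sqrt (by positivity)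
  have hs2 : √(N : ℝ) ^ 2 = N := Real.sq_sqrt hN'.le
  set d : ℝ := log N / (2 * √N) with hd
  have hd0 : 0 ≤ d := by positivity
  have hd1 : d ≤ 1 := by
    rw [hd, div_le_one (by positivity)]
    exact log_natCast_le_two_mul_sqrt hN
  have hsd : √N * d = log N / 2 := by rw [hd]; field_simp
  have hle : remLevel N = √N * √(2 * log 2) - 2 * d := by
    rw [remLevel, hd]; field_simp
  have htail := sub_mul_gaussianPDFReal_le_tail (remLevel_nonneg hN)
    (b := remLevel N + d) (by linarith)
  have hb : (remLevel N + d) ^ 2 / 2 =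
      N * log 2 - √(2 * log 2) * (log N / 2) + d ^ 2 / 2 := by
    rw [hle, ← hsd]
    linear_combination (√(2 * log 2) ^ 2 / 2) * hs2 + (N / 2 : ℝ) * hc2
  have hexp : √N * exp (-(1 / 2)) ≤ 2 ^ N * exp (-((remLevel N + d) ^ 2 / 2)) := by
    rw [← Real.exp_log hs, Real.log_sqrt hN'.le,
      show (2 : ℝ) ^ N = exp (N * log 2) by rw [Real.exp_nat_mul, Real.exp_log two_pos],
      ← Real.exp_add, ← Real.exp_add, Real.exp_le_exp, hb]
    nlinarith
  calc (√(2 * π))⁻¹ * exp (-(1 / 2)) / 2 * log N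
      = (√(2 * π))⁻¹ * d * (√N * exp (-(1 / 2))) := by
        linear_combination -((√(2 * π))⁻¹ * exp (-(1 / 2))) * hsd
    _ ≤ (√(2 * π))⁻¹ * d * (2 ^ N * exp (-((remLevel N + d) ^ 2 / 2))) := by gcongr
    _ = 2 ^ N * ((remLevel N + d - remLevel N) * gaussianPDFReal 0 1 (remLevel N + d)) := by
        simp only [gaussianPDFReal, NNReal.coe_one, sub_zero, mul_one, neg_div]
        ring
    _ ≤ _ := by gcongr

instance isProbabilityMeasure_remMeasure (N : ℕ) : IsProbabilityMeasure (remMeasure N) := by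
  unfold remMeasure
  infer_instance

/-- The probability that no coordinate exceeds `a` decays exponentially in the expected number of
exceedances. -/
lemma remMeasure_real_pi_Iic_le (N : ℕ) (a : ℝ) :
    (remMeasure N).real (Set.univ.pi fun _ => Set.Iic a) ≤
      exp (-(2 ^ N * (gaussianReal 0 1).real (Set.Ioi a))) := by
  have hcompl : (gaussianReal 0 1).real (Set.Iic a) =
      1 - (gaussianReal 0 1).real (Set.Ioi a) := by
    rw [← Set.compl_Ioi, probReal_compl_eq_one_sub measurableSet_Ioi]
  rw [measureReal_def, remMeasure, Measure.pi_pi, ENNReal.toReal_prod]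
  simp only [← measureReal_def, hcompl, prod_const, card_univ, Fintype.card_pi, Fintype.card_bool,
    Fintype.card_fin]
  calc (1 - (gaussianReal 0 1).real (Set.Ioi a)) ^ 2 ^ N
      ≤ exp (-(gaussianReal 0 1).real (Set.Ioi a)) ^ 2 ^ N := by
        gcongr
        · exact sub_nonneg.2 measureReal_le_one
        · exact Real.one_sub_le_exp_neg _
    _ = _ := by
        rw [← Real.exp_nat_mul]
        push_cast
        ring_nf

/-- The minimum of the Hamiltonian is below the threshold iff some coordinate exceeds the level. -/
lemma setOf_inf'_lt_eq_compl_pi {N : ℕ} (hN : 1 ≤ N) :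
    {ω : Conf N → ℝ |
      (Finset.univ.inf' Finset.univ_nonempty fun σ : Conf N => -Real.sqrt N * ω σ) <
        -(N : ℝ) * Real.sqrt (2 * Real.log 2) + Real.log N} =
      (Set.univ.pi fun _ => Set.Iic (remLevel N))ᶜ := by
  have hN' : (0 : ℝ) < N := by exact_mod_cast hN
  have hs : 0 < √(N : ℝ) := Real.sqrt_pos.2 hN'
  have hthr : -(N : ℝ) * √(2 * log 2) + log N = -√N * remLevel N := by
    have hdiv : √(N : ℝ) * (log N / √N) = log N := mul_div_cancel₀ _ hs.ne'
    rw [remLevel]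
    linear_combination √(2 * log 2) * Real.sq_sqrt hN'.le - hdiv
  ext ω
  rw [Set.mem_ofPred_eq, hthr, Finset.inf'_lt_iff]
  simp only [Finset.mem_univ, true_and, neg_mul, neg_lt_neg_iff, mul_lt_mul_iff_right₀ hs,
    Set.mem_compl_iff, Set.mem_univ_pi, Set.mem_Iic, not_forall, not_le]

/-- With high probability the minimum of the REM Hamiltonian `ℋ_N(σ) = −√N X_σ` is
below `−N√(2 ln 2) + ln N`. -/
theorem rem_min_upper_bound_whp :
    Tendsto (fun N : ℕ =>
        remMeasure N {ω : Conf N → ℝ |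
          (Finset.univ.inf' Finset.univ_nonempty fun σ : Conf N =>
              -Real.sqrt N * ω σ) <
            -(N : ℝ) * Real.sqrt (2 * Real.log 2) + Real.log N})
      atTop (nhds 1) := by
  have hK : 0 < (√(2 * π))⁻¹ * exp (-(1 / 2)) / 2 := by positivity
  have hlower : Tendsto
      (fun N : ℕ => 1 - exp (-((√(2 * π))⁻¹ * exp (-(1 / 2)) / 2 * log N))) atTop (nhds 1) := by
    have h := Real.tendsto_exp_neg_atTop_nhds_zero.comp
      ((Real.tendsto_log_atTop.comp tendsto_natCast_atTop_atTop).const_mul_atTop hK)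
    simpa using h.const_sub 1
  have hreal := tendsto_of_tendsto_of_tendsto_of_le_of_le' hlower tendsto_const_nhds
    (f := fun N : ℕ => (remMeasure N).real {ω : Conf N → ℝ |
      (Finset.univ.inf' Finset.univ_nonempty fun σ : Conf N => -Real.sqrt N * ω σ) <
        -(N : ℝ) * Real.sqrt (2 * Real.log 2) + Real.log N}) ?_
    (Eventually.of_forall fun N => measureReal_le_one)
  · simpa using ENNReal.tendsto_ofReal hreal
  filter_upwards [eventually_ge_atTop 1] with N hN
  rw [setOf_inf'_lt_eq_compl_pi hN,
    probReal_compl_eq_one_sub (MeasurableSet.univ_pi fun _ => measurableSet_Iic)]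
  have h := remMeasure_real_pi_Iic_le N (remLevel N)
  have h' := Real.exp_le_exp.2 (neg_le_neg (const_mul_log_le_two_pow_mul_tail hN))
  linarith
end
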